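/- A q-binomial–q-Gamma identity: for every integer l ≥ 1 and every real α, ∑_{j=0}^l (−1)^j q^{j(j−1)} · C(l, j; q²) · ∏_{i=1}^{l−1} [α + i − j]_{q²} = 0, where C(l, j; q²) = [l]_{q²}! / ( [j]_{q²}! [l−j]_{q²}! ) is the q²-binomial coefficient and the product ∏_{i=1}^{l−1} is taken to equal 1 when l = 1. (Equivalently, ∑_{j=0}^l (−1)^j q^{j(j−1)} C(l, j; q²) Γ_{q²}(α+l−j)/Γ_{q²}(α+1−j) = 0.) -/

import Mathlib

open scoped BigOperators

noncomputable section

/-- The q-number `[u]_q = (q^u - 1)/(q - 1)`. -/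
def qNum (q u : ℝ) : ℝ := (q ^ u - 1) / (q - 1)

/-- The q-factorial `[n]_q! = ∏_{i=1}^n [i]_q`. -/
def qFact (q : ℝ) (n : ℕ) : ℝ := ∏ i ∈ Finset.range n, qNum q ((i : ℝ) + 1)

/-- The q-Gamma function `Γ_q(t) = (1-q)^{1-t} ∏_{k=0}^∞ (1-q^{k+1})/(1-q^{k+t})`. -/
def qGamma (q t : ℝ) : ℝ :=
  (1 - q) ^ (1 - t) * ∏' k : ℕ, (1 - q ^ (k + 1)) / (1 - q ^ ((k : ℝ) + t))

/-- The q-derivative `∂^q_t f(t) = (f(qt) - f(t))/((q-1)t)`.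
The `q⁻¹`-derivative is `qDeriv q⁻¹`. -/
def qDeriv (q : ℝ) (f : ℝ → ℝ) (t : ℝ) : ℝ := (f (q * t) - f t) / ((q - 1) * t)

/-- The q-Pochhammer symbol `(a; q)_k = ∏_{l=0}^{k-1} (1 - a q^l)`. -/
def qPoch (a q : ℝ) (k : ℕ) : ℝ := ∏ l ∈ Finset.range k, (1 - a * q ^ l)

/-- The q-exponential `E_q(t) = ∑_{j=0}^∞ q^{j(j-1)/2} t^j/[j]_q!`. -/
def qExpE (q t : ℝ) : ℝ := ∑' j : ℕ, q ^ (j * (j - 1) / 2) * t ^ j / qFact q j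

/-- `e_q(-u) := 1/E_q(u)` (intended for `u ≥ 0`); `qExpe q u` denotes `e_q(-u)`. -/
def qExpe (q u : ℝ) : ℝ := (qExpE q u)⁻¹

/-- The first q-Bessel function `J^{(1)}_ν(x|q²)`. -/
def qBessel1 (q ν x : ℝ) : ℝ :=
  (x / (1 + q)) ^ ν *
    ∑' i : ℕ, (-1 : ℝ) ^ i / (qFact (q ^ 2) i * qGamma (q ^ 2) ((i : ℝ) + ν + 1)) *
      (x / (1 + q)) ^ (2 * i)

/-- The second q-Bessel function `J^{(2)}_ν(x|q²)`. -/
def qBessel2 (q ν x : ℝ) : ℝ :=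
  q ^ (ν ^ 2) * (x / (1 + q)) ^ ν *
    ∑' i : ℕ, q ^ (2 * (i : ℝ) * ((i : ℝ) + ν)) * (-1 : ℝ) ^ i /
        (qFact (q ^ 2) i * qGamma (q ^ 2) ((i : ℝ) + ν + 1)) *
      (x / (1 + q)) ^ (2 * i)

/-- The q-Laguerre polynomial `𝓛^{(α)}_j(u|q²)`. -/
def qLaguerre (q α : ℝ) (j : ℕ) (u : ℝ) : ℝ :=
  ∑ i ∈ Finset.range (j + 1),
    q ^ ((j - i) * (j - i + 1)) * (-u) ^ i / (qFact (q ^ 2) (j - i) * qFact (q ^ 2) i) *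
      (qPoch (q ^ (2 * (i : ℝ) + 2 * α + 2)) (q ^ 2) (j - i) / (1 - q ^ 2) ^ (j - i))

/-- The q-Laguerre polynomial `𝓛^{(α)}_j(u|q^{-2})`. -/
def qLaguerreInv (q α : ℝ) (j : ℕ) (u : ℝ) : ℝ :=
  q ^ (-(j : ℝ) * ((j : ℝ) + 1 + 2 * α)) *
    ∑ i ∈ Finset.range (j + 1),
      q ^ (2 * (i : ℝ) * ((i : ℝ) + α)) * (-u) ^ i / (qFact (q ^ 2) (j - i) * qFact (q ^ 2) i) *
        (qPoch (q ^ (2 * (i : ℝ) + 2 * α + 2)) (q ^ 2) (j - i) / (1 - q ^ 2) ^ (j - i))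

/-- The finite Jackson q-integral `∫_0^a f(t) d_q t = (1-q) a ∑_{k=0}^∞ f(q^k a) q^k`. -/
def jackson (q a : ℝ) (f : ℝ → ℝ) : ℝ := (1 - q) * a * ∑' k : ℕ, f (q ^ k * a) * q ^ k

/-- The infinite Jackson q-integral `∫_0^{γ·∞} f(t) d_q t = (1-q) γ ∑_{k=-∞}^∞ f(q^k γ) q^k`. -/
def jacksonInf (q γ : ℝ) (f : ℝ → ℝ) : ℝ := (1 - q) * γ * ∑' k : ℤ, f (q ^ k * γ) * q ^ k

/-- The first q-Hankel transform `𝓗̄^{q,β}_ν`. -/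
def hankel1 (q μ ν β : ℝ) (f : ℝ → ℝ) (t : ℝ) : ℝ :=
  (1 + q) / μ * jackson q (Real.sqrt (μ / ((1 - q ^ 2) * β)))
    (fun r => qBessel1 q ν ((1 + q) / μ * (r * t)) / (r * t) ^ ν * r ^ (2 * ν + 1) * f r)

/-- The second q-Hankel transform `𝓗^{q,γ}_ν`. -/
def hankel2 (q μ ν γ : ℝ) (f : ℝ → ℝ) (r : ℝ) : ℝ :=
  (1 + q) / μ * jacksonInf q γ
    (fun t => qBessel2 q ν (q * ((1 + q) / μ) * (r * t)) / (r * t) ^ ν * t ^ (2 * ν + 1) * f t)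

/-!
By the finite `q`-binomial theorem, `∑ j, (-1)^j q^(j.choose 2) C(n, j; q) y^j` factors as
`∏ i < n, (1 - q^i y)`, which vanishes at `y = q^(-m)` for every `m < n`. Hence the functional
`P ↦ ∑ j, (-1)^j q^(j.choose 2) C(n, j; q) P(q^(-j))` kills every monomial of degree less than `n`.
Since `[x - j]_q` is a polynomial of degree at most one in `q^(-j)`, a product of fewer than `n`
such factors is killed as well.
-/

section GaussBinom

open Finset Polynomial

/-- The Gaussian binomial coefficient `C(n, k; q)`, defined by the `q`-Pascal rule so that it makes
sense in every commutative semiring, without dividing `q`-factorials. -/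
def gaussBinom {R : Type*} [CommSemiring R] (q : R) : ℕ → ℕ → R
  | _, 0 => 1
  | 0, _ + 1 => 0
  | n + 1, k + 1 => gaussBinom q n k + q ^ (k + 1) * gaussBinom q n (k + 1)

section CommSemiring

variable {R : Type*} [CommSemiring R] (q : R)

lemma gaussBinom_zero_right (n : ℕ) : gaussBinom q n 0 = 1 := by
  cases n <;> rfl

lemma gaussBinom_succ_succ (n k : ℕ) :
    gaussBinom q (n + 1) (k + 1) = gaussBinom q n k + q ^ (k + 1) * gaussBinom q n (k + 1) :=
  rfl

lemma gaussBinom_eq_zero_of_lt : ∀ {n k : ℕ}, n < k → gaussBinom q n k = 0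
  | _, 0, h => absurd h (Nat.not_lt_zero _)
  | 0, _ + 1, _ => rfl
  | n + 1, k + 1, h => by
    rw [gaussBinom_succ_succ, gaussBinom_eq_zero_of_lt (Nat.lt_of_succ_lt_succ h),
      gaussBinom_eq_zero_of_lt (Nat.lt_of_succ_lt h), mul_zero, add_zero]

lemma gaussBinom_self : ∀ n : ℕ, gaussBinom q n n = 1
  | 0 => rfl
  | n + 1 => by
    rw [gaussBinom_succ_succ, gaussBinom_self n, gaussBinom_eq_zero_of_lt q n.lt_succ_self,
      mul_zero, add_zero]

lemma pow_choose_two_mul_gaussBinom_succ_succ_mul_pow (n k : ℕ) (y : R) :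
    q ^ (k + 1).choose 2 * gaussBinom q (n + 1) (k + 1) * y ^ (k + 1) =
      y * (q ^ k.choose 2 * gaussBinom q n k * (q * y) ^ k) +
        q ^ (k + 1).choose 2 * gaussBinom q n (k + 1) * (q * y) ^ (k + 1) := by
  rw [gaussBinom_succ_succ, Nat.choose_succ_succ' k 1, Nat.choose_one_right]
  ring

theorem sum_pow_choose_two_mul_gaussBinom_mul_pow (n : ℕ) (y : R) :
    ∑ j ∈ range (n + 1), q ^ j.choose 2 * gaussBinom q n j * y ^ j =
      ∏ i ∈ range n, (1 + q ^ i * y) := by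
  induction n generalizing y with
  | zero => simp [gaussBinom_zero_right]
  | succ n ih =>
    let term (j : ℕ) : R := q ^ j.choose 2 * gaussBinom q n j * (q * y) ^ j
    have shifted_sum : ∑ k ∈ range (n + 1), term (k + 1) + 1 = ∑ j ∈ range (n + 1), term j := by
      have term_zero : term 0 = 1 := by simp [term, gaussBinom_zero_right]
      have term_last : term (n + 1) = 0 := by
        simp [term, gaussBinom_eq_zero_of_lt q n.lt_succ_self]
      rw [← term_zero, ← sum_range_succ', sum_range_succ, term_last, add_zero]
    calc ∑ j ∈ range (n + 2), q ^ j.choose 2 * gaussBinom q (n + 1) j * y ^ j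
        = ∑ k ∈ range (n + 1), (y * term k + term (k + 1)) + 1 := by
          rw [sum_range_succ']
          simp only [pow_choose_two_mul_gaussBinom_succ_succ_mul_pow, term]
          simp [gaussBinom_zero_right]
      _ = (∑ j ∈ range (n + 1), term j) * (1 + y) := by
          rw [sum_add_distrib, ← mul_sum, add_assoc, shifted_sum]
          ring
      _ = ∏ i ∈ range (n + 1), (1 + q ^ i * y) := by
          rw [ih (q * y), prod_range_succ']
          simp only [pow_succ, pow_zero, one_mul, mul_assoc]

end CommSemiring

theorem sum_gaussBinom_mul_eval_pow_eq_zero {R : Type*} [CommRing R] {q r : R} (hqr : q * r = 1)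
    {n : ℕ} {P : R[X]} (hP : P.natDegree < n) :
    ∑ j ∈ range (n + 1), (-1) ^ j * q ^ j.choose 2 * gaussBinom q n j * P.eval (r ^ j) = 0 := by
  have monomial_sum_eq_zero (m : ℕ) (hm : m ∈ range n) :
      ∑ j ∈ range (n + 1), q ^ j.choose 2 * gaussBinom q n j * (-r ^ m) ^ j = 0 := by
    rw [sum_pow_choose_two_mul_gaussBinom_mul_pow]
    refine prod_eq_zero hm ?_
    rw [mul_neg, ← mul_pow, hqr, one_pow, add_neg_cancel]
  simp only [eval_eq_sum_range' hP, mul_sum]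
  rw [sum_comm]
  refine sum_eq_zero fun m hm => ?_
  calc ∑ j ∈ range (n + 1),
        (-1) ^ j * q ^ j.choose 2 * gaussBinom q n j * (P.coeff m * (r ^ j) ^ m)
      = P.coeff m * ∑ j ∈ range (n + 1), q ^ j.choose 2 * gaussBinom q n j * (-r ^ m) ^ j := by
        rw [mul_sum]
        refine sum_congr rfl fun j _ => ?_
        rw [neg_pow (r ^ m), pow_right_comm r m j]
        ring
    _ = 0 := by rw [monomial_sum_eq_zero m hm, mul_zero]

end GaussBinom

section QNumber

open Finset Polynomial

lemma qNum_natCast_add (p : ℝ) (a b : ℕ) :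
    qNum p ((a + b : ℕ) : ℝ) = qNum p a + p ^ a * qNum p b := by
  simp only [qNum, Real.rpow_natCast, pow_add]
  ring

lemma qNum_natCast_pos {p : ℝ} (hp0 : 0 ≤ p) (hp1 : p ≠ 1) {n : ℕ} (hn : n ≠ 0) :
    0 < qNum p n := by
  rw [qNum, Real.rpow_natCast, ← geom_sum_eq hp1]
  exact geom_sum_pos hp0 hn

lemma qFact_zero (p : ℝ) : qFact p 0 = 1 :=
  prod_range_zero _

lemma qFact_succ (p : ℝ) (n : ℕ) : qFact p (n + 1) = qFact p n * qNum p ((n + 1 : ℕ) : ℝ) := by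
  rw [qFact, prod_range_succ, ← qFact, Nat.cast_succ]

lemma qFact_pos {p : ℝ} (hp0 : 0 ≤ p) (hp1 : p ≠ 1) (n : ℕ) : 0 < qFact p n :=
  prod_pos fun i _ => mod_cast qNum_natCast_pos hp0 hp1 i.succ_ne_zero

theorem gaussBinom_mul_qFact_mul_qFact (p : ℝ) :
    ∀ a b : ℕ, gaussBinom p (a + b) a * (qFact p a * qFact p b) = qFact p (a + b)
  | 0, b => by rw [gaussBinom_zero_right, qFact_zero, one_mul, one_mul, zero_add]
  | a + 1, 0 => by rw [add_zero, gaussBinom_self, qFact_zero, one_mul, mul_one]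
  | a + 1, b + 1 => by
    have drop_left := gaussBinom_mul_qFact_mul_qFact p a (b + 1)
    have drop_right := gaussBinom_mul_qFact_mul_qFact p (a + 1) b
    rw [show a + 1 + b = a + (b + 1) by ring] at drop_right
    have qNum_split := qNum_natCast_add p (a + 1) (b + 1)
    rw [show a + 1 + (b + 1) = a + (b + 1) + 1 by ring] at qNum_split ⊢
    rw [gaussBinom_succ_succ, qFact_succ p (a + (b + 1)), qNum_split]
    rw [qFact_succ p b] at drop_left ⊢
    rw [qFact_succ p a] at drop_right ⊢
    linear_combination qNum p ((a + 1 : ℕ) : ℝ) * drop_left +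
      p ^ (a + 1) * qNum p ((b + 1 : ℕ) : ℝ) * drop_right

lemma qFact_div_eq_gaussBinom {p : ℝ} (hp0 : 0 ≤ p) (hp1 : p ≠ 1) {n k : ℕ} (hk : k ≤ n) :
    qFact p n / (qFact p k * qFact p (n - k)) = gaussBinom p n k := by
  have fact_mul_ne_zero : qFact p k * qFact p (n - k) ≠ 0 :=
    (mul_pos (qFact_pos hp0 hp1 k) (qFact_pos hp0 hp1 (n - k))).ne'
  rw [div_eq_iff fact_mul_ne_zero]
  simpa only [Nat.add_sub_cancel' hk] using (gaussBinom_mul_qFact_mul_qFact p k (n - k)).symm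

/-- The `q`-number `[x - u]_p` as a polynomial in the variable `X = p ^ (-u)`. -/
def qNumPoly (p x : ℝ) : ℝ[X] := C (p ^ x / (p - 1)) * X - C (1 / (p - 1))

lemma natDegree_qNumPoly_le (p x : ℝ) : (qNumPoly p x).natDegree ≤ 1 := by
  rw [qNumPoly, natDegree_sub_C]
  exact (natDegree_C_mul_le _ X).trans natDegree_X_le

lemma eval_qNumPoly_inv_pow {p : ℝ} (hp : 0 < p) (x : ℝ) (j : ℕ) :
    (qNumPoly p x).eval (p⁻¹ ^ j) = qNum p (x - j) := by
  simp only [qNumPoly, eval_sub, eval_mul, eval_C, eval_X]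
  rw [qNum, Real.rpow_sub hp, Real.rpow_natCast, inv_pow]
  ring

lemma natDegree_prod_qNumPoly_le {ι : Type*} (p : ℝ) (s : Finset ι) (x : ι → ℝ) :
    (∏ i ∈ s, qNumPoly p (x i)).natDegree ≤ #s :=
  calc (∏ i ∈ s, qNumPoly p (x i)).natDegree
      ≤ ∑ i ∈ s, (qNumPoly p (x i)).natDegree := natDegree_prod_le _ _
    _ ≤ ∑ _i ∈ s, 1 := sum_le_sum fun i _ => natDegree_qNumPoly_le p (x i)
    _ = #s := (card_eq_sum_ones s).symm

theorem qBinomial_qGamma_identity_general {ι : Type*} {p : ℝ} (hp0 : 0 < p) (hp1 : p ≠ 1)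
    {l : ℕ} {s : Finset ι} (hs : #s < l) (x : ι → ℝ) :
    ∑ j ∈ range (l + 1),
      (-1 : ℝ) ^ j * p ^ j.choose 2 * (qFact p l / (qFact p j * qFact p (l - j))) *
        ∏ i ∈ s, qNum p (x i - j) = 0 := by
  rw [← sum_gaussBinom_mul_eval_pow_eq_zero (mul_inv_cancel₀ hp0.ne')
    ((natDegree_prod_qNumPoly_le p s x).trans_lt hs)]
  refine sum_congr rfl fun j hj => ?_
  rw [qFact_div_eq_gaussBinom hp0.le hp1 (mem_range_succ_iff.mp hj), eval_prod]
  simp only [eval_qNumPoly_inv_pow hp0]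

end QNumber

lemma sq_pow_choose_two {M : Type*} [Monoid M] (x : M) (j : ℕ) :
    (x ^ 2) ^ j.choose 2 = x ^ (j * (j - 1)) := by
  rw [← pow_mul, Nat.choose_two_right, Nat.mul_div_cancel' (Nat.even_mul_pred_self j).two_dvd]

/-- a q-binomial–q-Gamma identity: for every integer `l ≥ 1` and real `α`,
`∑_{j=0}^l (-1)^j q^{j(j-1)} C(l,j;q²) ∏_{i=1}^{l-1} [α+i-j]_{q²} = 0`, where
`C(l,j;q²) = [l]_{q²}!/([j]_{q²}! [l-j]_{q²}!)` and the empty product (for `l = 1`) is `1`. -/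
theorem qBinomial_qGamma_identity (q : ℝ) (hq0 : 0 < q) (hq1 : q < 1)
    (l : ℕ) (hl : 1 ≤ l) (α : ℝ) :
    ∑ j ∈ Finset.range (l + 1),
      (-1 : ℝ) ^ j * q ^ (j * (j - 1)) *
        (qFact (q ^ 2) l / (qFact (q ^ 2) j * qFact (q ^ 2) (l - j))) *
        ∏ i ∈ Finset.range (l - 1), qNum (q ^ 2) (α + ((i : ℝ) + 1) - (j : ℝ)) = 0 := by
  have hp1 : q ^ 2 ≠ 1 := (pow_lt_one₀ hq0.le hq1 two_ne_zero).ne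
  have hcard : (Finset.range (l - 1)).card < l := by rw [Finset.card_range]; lia
  simpa only [sq_pow_choose_two] using
    qBinomial_qGamma_identity_general (pow_pos hq0 2) hp1 hcard fun i => α + ((i : ℝ) + 1)
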